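/- For every integer k ≥ 3 and every real c > 2^(k-1)·ln 2 − (ln 2)/2, the probability that a random k-uniform hypergraph H_k(n, m) with m = ⌊cn⌋ hyperedges is 2-colorable tends to 0 as n → ∞; that is, the ratio (number of 2-colorable m-element subsets of the k-element subsets of an n-vertex set) / C(C(n,k), m) tends to 0 as n → ∞. -/

import Mathlib

/-- A hypergraph (a set of hyperedges on vertex set `Fin n`) is 2-colorable if the
vertices can be 2-colored so that no hyperedge is monochromatic. -/
def IsTwoColorable {n : ℕ} (H : Finset (Finset (Fin n))) : Prop :=
  ∃ σ : Fin n → Bool, ∀ e ∈ H, (∃ v ∈ e, σ v = true) ∧ (∃ v ∈ e, σ v = false)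

lemma aux_choose (a N m : ℕ) (h : a ≤ N) : a.choose m * N ^ m ≤ N.choose m * a ^ m := by
  have key : ∀ m, a.descFactorial m * N ^ m ≤ N.descFactorial m * a ^ m := by
    intro m
    induction m with
    | zero => simp
    | succ m ih =>
      rw [Nat.descFactorial_succ, Nat.descFactorial_succ, pow_succ, pow_succ]
      have h1 : (a - m) * N ≤ (N - m) * a := by
        rw [Nat.sub_mul, Nat.sub_mul, mul_comm N a]
        exact Nat.sub_le_sub_left (Nat.mul_le_mul_left _ h) _
      calc (a - m) * a.descFactorial m * (N ^ m * N)
          = ((a - m) * N) * (a.descFactorial m * N ^ m) := by ring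
        _ ≤ ((N - m) * a) * (N.descFactorial m * a ^ m) := Nat.mul_le_mul h1 ih
        _ = _ := by ring
  have := key m
  rw [Nat.descFactorial_eq_factorial_mul_choose, Nat.descFactorial_eq_factorial_mul_choose,
    mul_assoc, mul_assoc] at this
  exact Nat.le_of_mul_le_mul_left this (Nat.factorial_pos m)

lemma aux_choose_real (a N m : ℕ) (h : a ≤ N) (q : ℝ) (hq : (a : ℝ) ≤ q * N) :
    (a.choose m : ℝ) ≤ q ^ m * N.choose m := by
  rcases Nat.eq_zero_or_pos N with rfl | hN
  · have : a = 0 := by omega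
    subst this
    rcases m with _ | m <;> simp
  have hN' : (0 : ℝ) < N := by exact_mod_cast hN
  have h1 : (a.choose m : ℝ) * N ^ m ≤ N.choose m * a ^ m := by exact_mod_cast aux_choose a N m h
  have h2 : (a : ℝ) ^ m ≤ (q * N) ^ m := pow_le_pow_left₀ (by positivity) hq m
  have h3 : (a.choose m : ℝ) * N ^ m ≤ (q ^ m * N.choose m) * N ^ m := by
    calc _ ≤ (N.choose m : ℝ) * a ^ m := h1
      _ ≤ N.choose m * (q * N) ^ m := by gcongr
      _ = _ := by rw [mul_pow]; ring
  exact le_of_mul_le_mul_right h3 (by positivity)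

open Classical in
noncomputable def goodE (n k : ℕ) (σ : Fin n → Bool) : Finset (Finset (Fin n)) :=
  (Finset.powersetCard k Finset.univ).filter
    (fun e => (∃ v ∈ e, σ v = true) ∧ (∃ v ∈ e, σ v = false))

lemma goodE_card_le (n k : ℕ) (σ : Fin n → Bool) : (goodE n k σ).card ≤ n.choose k := by
  classical
  refine (Finset.card_filter_le _ _).trans ?_
  simp

lemma goodE_card (n k : ℕ) (hk : 1 ≤ k) (σ : Fin n → Bool) :
    ∃ a b : ℕ, a + b = n ∧ (goodE n k σ).card + (a.choose k + b.choose k) = n.choose k := by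
  classical
  let A := Finset.univ.filter (fun v => σ v = true)
  let B := Finset.univ.filter (fun v => ¬ σ v = true)
  refine ⟨A.card, B.card, ?_, ?_⟩
  · have := Finset.card_filter_add_card_filter_not (s := (Finset.univ : Finset (Fin n)))
      (fun v => σ v = true)
    rw [Finset.card_univ, Fintype.card_fin] at this
    exact this
  · have h0 := Finset.card_filter_add_card_filter_not
      (s := Finset.powersetCard k (Finset.univ : Finset (Fin n)))
      (fun e => (∃ v ∈ e, σ v = true) ∧ (∃ v ∈ e, σ v = false))
    rw [Finset.card_powersetCard, Finset.card_univ, Fintype.card_fin] at h0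
    rw [← h0, ← Finset.card_powersetCard, ← Finset.card_powersetCard,
      ← Finset.card_union_of_disjoint]
    · unfold goodE
      congr 2
      ext e
      simp only [Finset.mem_union, Finset.mem_powersetCard, Finset.mem_filter,
        true_and, A, B, Finset.subset_iff, Finset.mem_univ, implies_true]
      constructor
      · rintro (⟨h, hc⟩ | ⟨h, hc⟩)
        · refine ⟨hc, ?_⟩
          rintro ⟨-, v, hv, hv2⟩
          simp [h hv] at hv2
        · refine ⟨hc, ?_⟩
          rintro ⟨⟨v, hv, hv2⟩, -⟩
          exact h hv hv2
      · rintro ⟨hc, h⟩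
        by_cases h1 : ∃ v ∈ e, σ v = true
        · left
          refine ⟨fun v hv => ?_, hc⟩
          by_contra h2
          exact h ⟨h1, v, hv, by simpa using h2⟩
        · right
          exact ⟨fun v hv h2 => h1 ⟨v, hv, h2⟩, hc⟩
    · rw [Finset.disjoint_left]
      intro e he he'
      rw [Finset.mem_powersetCard] at he he'
      have : e.Nonempty := by rw [← Finset.card_pos]; omega
      obtain ⟨v, hv⟩ := this
      have h1 := he.1 hv
      have h2 := he'.1 hv
      simp [A, B] at h1 h2
      simp [h1] at h2

lemma count_le (n k m : ℕ) (q : ℝ)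
    (hq : ∀ σ : Fin n → Bool, ((goodE n k σ).card : ℝ) ≤ q * n.choose k) :
    (Nat.card {H : Finset (Finset (Fin n)) //
            H.card = m ∧ (∀ e ∈ H, e.card = k) ∧ IsTwoColorable H} : ℝ) ≤
      2 ^ n * (q ^ m * ((n.choose k).choose m : ℕ)) := by
  classical
  have h1 : Nat.card {H : Finset (Finset (Fin n)) //
            H.card = m ∧ (∀ e ∈ H, e.card = k) ∧ IsTwoColorable H} ≤
      ∑ σ : Fin n → Bool, ((goodE n k σ).card).choose m := by
    rw [Nat.card_eq_fintype_card, Fintype.card_subtype]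
    simp_rw [← Finset.card_powersetCard]
    refine le_trans (Finset.card_le_card ?_) Finset.card_biUnion_le
    intro H hH
    simp only [Finset.mem_filter, Finset.mem_univ, true_and] at hH
    obtain ⟨hm, hk, σ, hσ⟩ := hH
    simp only [Finset.mem_biUnion, Finset.mem_univ, true_and, Finset.mem_powersetCard]
    refine ⟨σ, fun e he => ?_, hm⟩
    simp only [goodE, Finset.mem_filter, Finset.mem_powersetCard, Finset.subset_univ, true_and]
    exact ⟨hk e he, hσ e he⟩
  have h2 : ((∑ σ : Fin n → Bool, ((goodE n k σ).card).choose m : ℕ) : ℝ) ≤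
      ∑ σ : Fin n → Bool, q ^ m * ((n.choose k).choose m : ℕ) := by
    push_cast
    exact Finset.sum_le_sum fun σ _ => aux_choose_real _ _ _ (goodE_card_le n k σ) q (hq σ)
  refine (Nat.cast_le.mpr h1).trans (h2.trans ?_)
  simp

lemma good_bound (n k : ℕ) (hk : 1 ≤ k) (y : ℝ) (hn : 2 * k ≤ n)
    (hy : y * 2 ^ (k - 1) * (n : ℝ) ^ k ≤ ((n : ℝ) - 2 * k) ^ k) (hy0 : 0 ≤ y)
    (σ : Fin n → Bool) : ((goodE n k σ).card : ℝ) ≤ (1 - y) * n.choose k := by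
  obtain ⟨a, b, hab, hc⟩ := goodE_card n k hk σ
  have ha : (a + 1 - k) ^ k ≤ k.factorial * a.choose k := by
    rw [← Nat.descFactorial_eq_factorial_mul_choose]; exact Nat.pow_sub_le_descFactorial a k
  have hb : (b + 1 - k) ^ k ≤ k.factorial * b.choose k := by
    rw [← Nat.descFactorial_eq_factorial_mul_choose]; exact Nat.pow_sub_le_descFactorial b k
  have hN : k.factorial * n.choose k ≤ n ^ k := by
    rw [← Nat.descFactorial_eq_factorial_mul_choose]; exact Nat.descFactorial_le_pow n k
  have h1 : (n - 2 * k) ^ k ≤ 2 ^ (k - 1) * (k.factorial * (a.choose k + b.choose k)) := by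
    calc (n - 2 * k) ^ k ≤ ((a + 1 - k) + (b + 1 - k)) ^ k :=
          Nat.pow_le_pow_left (by omega) k
      _ ≤ 2 ^ (k - 1) * ((a + 1 - k) ^ k + (b + 1 - k) ^ k) :=
          add_pow_le (Nat.zero_le _) (Nat.zero_le _) k
      _ ≤ _ := by rw [mul_add k.factorial]; gcongr
  have h1' : ((n : ℝ) - 2 * k) ^ k ≤
      2 ^ (k - 1) * (k.factorial * ((a.choose k : ℝ) + b.choose k)) := by
    have : (((n - 2 * k : ℕ) : ℝ)) ^ k ≤
      2 ^ (k - 1) * (k.factorial * ((a.choose k : ℝ) + b.choose k)) := by exact_mod_cast h1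
    rw [Nat.cast_sub hn] at this
    simpa using this
  have hN' : (k.factorial : ℝ) * n.choose k ≤ (n : ℝ) ^ k := by exact_mod_cast hN
  have hc' : ((goodE n k σ).card : ℝ) + (a.choose k + b.choose k) = n.choose k := by
    exact_mod_cast hc
  have hp : (0 : ℝ) < 2 ^ (k - 1) * k.factorial := by positivity
  have : (2 ^ (k - 1) * k.factorial : ℝ) * (y * n.choose k) ≤
      (2 ^ (k - 1) * k.factorial) * ((a.choose k : ℝ) + b.choose k) := by
    calc _ = y * 2 ^ (k - 1) * ((k.factorial : ℝ) * n.choose k) := by ring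
      _ ≤ y * 2 ^ (k - 1) * (n : ℝ) ^ k := by gcongr
      _ ≤ _ := hy
      _ ≤ _ := h1'
      _ = _ := by ring
  have := le_of_mul_le_mul_left this hp
  linarith

lemma ev_bound (k : ℕ) (y : ℝ) (hy : y * 2 ^ (k - 1) < 1) :
    ∀ᶠ n : ℕ in Filter.atTop,
      y * 2 ^ (k - 1) * (n : ℝ) ^ k ≤ ((n : ℝ) - 2 * k) ^ k := by
  have h1 : Filter.Tendsto (fun n : ℕ => (1 - (2 * k : ℝ) / n) ^ k) Filter.atTop (nhds 1) := by
    have := ((tendsto_const_div_atTop_nhds_zero_nat (2 * k : ℝ)).const_sub 1).pow k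
    simpa using this
  filter_upwards [h1.eventually (lt_mem_nhds hy), Filter.eventually_gt_atTop 0] with n hn hn0
  have hn0' : (0 : ℝ) < n := by exact_mod_cast hn0
  have : ((n : ℝ) - 2 * k) = (1 - (2 * k : ℝ) / n) * n := by field_simp
  rw [this, mul_pow]
  gcongr

lemma log_ineq (x c : ℝ) (hx : 0 < x) (hx1 : x < 1) (hc : Real.log 2 / x - Real.log 2 / 2 < c) :
    Real.log 2 + c * Real.log (1 - x) < 0 := by
  have h1 : 0 < 1 - x := by linarith
  have hl : Real.log (1 - x) ≤ - (2 * x / (2 - x)) := by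
    have := Real.le_log_one_add_of_nonneg (x := x / (1 - x)) (by positivity)
    have e1 : 1 + x / (1 - x) = (1 - x)⁻¹ := by field_simp; ring
    have e2 : 2 * (x / (1 - x)) / (x / (1 - x) + 2) = 2 * x / (2 - x) := by
      have : x / (1 - x) + 2 = (2 - x) / (1 - x) := by field_simp; ring
      rw [this]; field_simp
    rw [e1, e2, Real.log_inv] at this
    linarith
  have h2 : 0 < 2 - x := by linarith
  have hlog : 0 < Real.log 2 := Real.log_pos (by norm_num)
  have hneg : Real.log (1 - x) < 0 := Real.log_neg h1 (by linarith)
  have e3 : Real.log 2 / x - Real.log 2 / 2 = Real.log 2 * ((2 - x) / (2 * x)) := by field_simp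
  have h3 : c * Real.log (1 - x) < (Real.log 2 * ((2 - x) / (2 * x))) * Real.log (1 - x) :=
    mul_lt_mul_of_neg_right (e3 ▸ hc) hneg
  have h4 : (Real.log 2 * ((2 - x) / (2 * x))) * Real.log (1 - x) ≤
      (Real.log 2 * ((2 - x) / (2 * x))) * (- (2 * x / (2 - x))) :=
    mul_le_mul_of_nonneg_left hl (by positivity)
  have h5 : (Real.log 2 * ((2 - x) / (2 * x))) * (- (2 * x / (2 - x))) = - Real.log 2 := by
    field_simp
  linarith

lemma exists_y (x c : ℝ) (hx : 0 < x) (hx1 : x < 1)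
    (hc : Real.log 2 / x - Real.log 2 / 2 < c) :
    ∃ y, 0 < y ∧ y < x ∧ Real.log 2 + c * Real.log (1 - y) < 0 := by
  have hcont : ContinuousAt (fun y : ℝ => Real.log 2 + c * Real.log (1 - y)) x := by
    have : 1 - x ≠ 0 := by linarith
    fun_prop (disch := assumption)
  have h1 := hcont.eventually (gt_mem_nhds (log_ineq x c hx hx1 hc))
  have h2 : ∀ᶠ y in nhdsWithin x (Set.Iio x), Real.log 2 + c * Real.log (1 - y) < 0 :=
    h1.filter_mono nhdsWithin_le_nhds
  have h3 : ∀ᶠ y in nhdsWithin x (Set.Iio x), 0 < y :=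
    (lt_mem_nhds hx).filter_mono nhdsWithin_le_nhds
  obtain ⟨y, ⟨a, b⟩, d⟩ := ((h2.and h3).and self_mem_nhdsWithin).exists
  exact ⟨y, b, d, a⟩

/-- For all `k ≥ 3` and `c > 2^(k-1) ln 2 - (ln 2)/2`, the probability that a uniformly
random `k`-uniform hypergraph with `⌊cn⌋` hyperedges is 2-colorable tends to `0`. -/
theorem hypergraph_noncolorable_whp (k : ℕ) (hk : 3 ≤ k) (c : ℝ)
    (hc : 2 ^ (k - 1) * Real.log 2 - Real.log 2 / 2 < c) :
    Filter.Tendsto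
      (fun n : ℕ =>
        (Nat.card {H : Finset (Finset (Fin n)) //
            H.card = ⌊c * (n : ℝ)⌋₊ ∧ (∀ e ∈ H, e.card = k) ∧ IsTwoColorable H} : ℝ) /
          (Nat.choose (Nat.choose n k) ⌊c * (n : ℝ)⌋₊ : ℝ))
      Filter.atTop (nhds 0) := by
  have hp : (1 : ℝ) < 2 ^ (k - 1) := one_lt_pow₀ (by norm_num) (by omega)
  have hp0 : (0 : ℝ) < 2 ^ (k - 1) := by positivity
  obtain ⟨y, hy0, hyx, hy⟩ := exists_y ((2 ^ (k - 1))⁻¹) c (by positivity) (inv_lt_one_of_one_lt₀ hp)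
    (by rw [div_inv_eq_mul, mul_comm]; exact hc)
  have hy1 : y < 1 := hyx.trans (inv_lt_one_of_one_lt₀ hp)
  have hy2 : y * 2 ^ (k - 1) < 1 := by
    rwa [← lt_div_iff₀ hp0, one_div]
  set L := Real.log 2 + c * Real.log (1 - y) with hL
  have hq : 0 < 1 - y := by linarith
  have hqneg : Real.log (1 - y) < 0 := Real.log_neg hq (by linarith)
  have hlim : Filter.Tendsto (fun n : ℕ => Real.exp (L * n - Real.log (1 - y)))
      Filter.atTop (nhds 0) := by
    refine Real.tendsto_exp_atBot.comp ?_
    refine Filter.tendsto_atBot_add_const_right _ _ ?_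
    exact tendsto_natCast_atTop_atTop.const_mul_atTop_of_neg hy
  refine squeeze_zero' (Filter.Eventually.of_forall fun n => by positivity) ?_ hlim
  filter_upwards [ev_bound k y hy2, Filter.eventually_ge_atTop (2 * k)] with n hn hn2
  have hb := count_le n k ⌊c * (n : ℝ)⌋₊ (1 - y)
    (good_bound n k (by omega) y hn2 hn hy0.le)
  refine div_le_of_le_mul₀ (by positivity) (by positivity) (hb.trans ?_)
  rw [← mul_assoc]
  refine mul_le_mul_of_nonneg_right ?_ (by positivity)
  have e1 : (2 : ℝ) ^ n = Real.exp (n * Real.log 2) := by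
    rw [Real.exp_nat_mul, Real.exp_log (by norm_num)]
  have e2 : (1 - y) ^ ⌊c * (n : ℝ)⌋₊ = Real.exp (⌊c * (n : ℝ)⌋₊ * Real.log (1 - y)) := by
    rw [Real.exp_nat_mul, Real.exp_log hq]
  rw [e1, e2, ← Real.exp_add, Real.exp_le_exp, hL]
  have := Nat.sub_one_lt_floor (c * (n : ℝ))
  nlinarith [mul_lt_mul_of_neg_right this hqneg]
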